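/- Let X be a zero-dimensional, locally compact space which is not pseudocompact, with Banaschewski compactification bX, and let υX ⊆ bX be the copy of the N-compactification υ₀X of X inside bX. Then each of the subspaces bX ∖ υX and bX ∖ X contains a pairwise disjoint family of nonempty open subsets of cardinality 2^ℵ₀; in particular, the cellularity of each of these subspaces is at least 2^ℵ₀. -/

import Mathlib

/-!
Since `X` is locally compact and dense in `B`, it is open in `B`. An unbounded continuous function
on `X` yields points of `X` along which its absolute value grows by more than `2` at each step;
small clopen neighborhoods `K n` of these points are pairwise disjoint, and they form a locally
finite family in `X`. So for every `S ⊆ ℕ` the union `⋃ n ∈ S, K n` is clopen in `X`, and is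
therefore the trace on `X` of a clopen set `C S` of `B` (`exists_clopen_sequence`).

* If `S` is infinite, then `C S ∖ X` is nonempty by compactness (`trace_not_subset`).
* If `S ∩ T` is finite, then `C S ∩ C T ⊆ X`, because `C S ∩ C T` minus the closed set
  `⋃ n ∈ S ∩ T, K n` is open and misses the dense set `X` (`trace_inter_subset`).
* A point `p ∈ C S ∖ X` lies outside `υX`, as the sequence `C S ∖ K n` of clopen neighborhoods of
  `p` shows; since `X ⊆ υX`, the sets `C S` have the same trace on `B ∖ υX` and on `B ∖ X`.

The branches of the binary tree form an almost disjoint family of `2 ^ ℵ₀` infinite subsets of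
`ℕ`, and the corresponding sets `C S ∖ X` are the required disjoint open sets.
-/

open Set TopologicalSpace

universe u

/-- The copy of the `ℕ`-compactification `υ₀X` inside the Banaschewski compactification:
points all of whose countable families of clopen neighborhoods have intersection meeting `X`. -/
def upsilon {B : Type*} [TopologicalSpace B] (X : Set B) : Set B :=
  {p | ∀ V : ℕ → Set B, (∀ n, IsClopen (V n) ∧ p ∈ V n) → ((⋂ n, V n) ∩ X).Nonempty}

/-- The branch of the binary tree determined by `a`, as the set of codes of its finite initial
segments. -/
def branch (a : ℕ → Bool) : Set ℕ :=
  range fun k : ℕ => Encodable.encode ((List.range k).map a)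

lemma branch_infinite (a : ℕ → Bool) : (branch a).Infinite := by
  refine Set.infinite_range_of_injective fun k l h => ?_
  simpa using congrArg List.length (Encodable.encode_injective h)

lemma branch_inter_finite {a b : ℕ → Bool} (hab : a ≠ b) : (branch a ∩ branch b).Finite := by
  obtain ⟨i, hi⟩ := Function.ne_iff.1 hab
  -- Initial segments longer than `i` differ at position `i`.
  refine ((Set.finite_Iic i).image
    fun k : ℕ => Encodable.encode ((List.range k).map a)).subset ?_
  rintro n ⟨⟨k, rfl⟩, l, hl⟩
  have h := Encodable.encode_injective hl
  have hkl : l = k := by simpa using congrArg List.length h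
  subst hkl
  refine ⟨l, ?_, rfl⟩
  by_contra hlt
  simp only [mem_Iic, not_le] at hlt
  exact hi ((List.map_inj_left.1 h i (List.mem_range.2 hlt)).symm)

lemma isOpen_of_dense_of_locallyCompact {B : Type*} [TopologicalSpace B] [T2Space B]
    {X : Set B} (hd : Dense X) (hlc : LocallyCompactSpace X) : IsOpen X := by
  rw [isOpen_iff_mem_nhds]
  intro x hx
  obtain ⟨N, hN, hxN⟩ := exists_compact_mem_nhds (⟨x, hx⟩ : X)
  obtain ⟨U, hU, hUN⟩ := (mem_nhds_subtype X ⟨x, hx⟩ N).1 hxN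
  obtain ⟨O, hOU, hO, hxO⟩ := mem_nhds_iff.1 hU
  -- By density, `O` lies in the closure of `O ∩ X`, hence in the compact set `N`.
  have h1 : O ⊆ Subtype.val '' N := by
    refine (hd.open_subset_closure_inter hO).trans
      (closure_minimal ?_ (hN.image continuous_subtype_val).isClosed)
    rintro y ⟨hyO, hyX⟩
    exact ⟨⟨y, hyX⟩, hUN (hOU hyO), rfl⟩
  refine Filter.mem_of_superset (hO.mem_nhds hxO) (h1.trans ?_)
  rintro _ ⟨y, -, rfl⟩
  exact y.2

/-- Failure of pseudocompactness gives a disjoint sequence of nonempty clopen subsets of `B`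
inside `X`, each of whose subfamilies has a union that is the trace on `X` of a clopen set. -/
lemma exists_clopen_sequence {B : Type*} [TopologicalSpace B]
    (hB : IsTopologicalBasis {s : Set B | IsClopen s})
    (X : Set B) (hX : IsOpen X)
    (hext : ∀ g : X → Bool, Continuous g → ∃ G : B → Bool, Continuous G ∧ ∀ x : X, G x = g x)
    (hnp : ¬ ∀ f : X → ℝ, Continuous f → ∃ M : ℝ, ∀ x, |f x| ≤ M) :
    ∃ K : ℕ → Set B, (∀ n, IsClopen (K n) ∧ (K n).Nonempty ∧ K n ⊆ X) ∧
      (∀ m n, m ≠ n → Disjoint (K m) (K n)) ∧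
      ∀ S : Set ℕ, ∃ C : Set B, IsClopen C ∧ C ∩ X = ⋃ n ∈ S, K n := by
  classical
  push Not at hnp
  obtain ⟨f, hf, hunb⟩ := hnp
  obtain ⟨x, -, hx⟩ := exists_seq_of_forall_finset_exists (fun _ : X => True)
    (fun y z => |f y| + 2 < |f z|) (by
      intro s _
      obtain ⟨M, hM⟩ := (s.image fun y => |f y| + 2).bddAbove
      obtain ⟨z, hz⟩ := hunb M
      refine ⟨z, trivial, fun y hy => lt_of_le_of_lt (hM ?_) hz⟩
      exact Finset.mem_coe.2 (Finset.mem_image_of_mem _ hy))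
  have hgrow : ∀ n : ℕ, (n : ℝ) ≤ |f (x n)| := by
    intro n
    induction n with
    | zero => simp
    | succ n ih =>
      have := hx n (n + 1) (Nat.lt_succ_self n)
      push_cast
      linarith
  have hex : ∀ n, ∃ K : Set B, IsClopen K ∧ (x n : B) ∈ K ∧
      K ⊆ Subtype.val '' {y : X | |(|f y| - |f (x n)|)| < 1} := by
    intro n
    have ho : IsOpen {y : X | |(|f y| - |f (x n)|)| < 1} :=
      isOpen_lt (by fun_prop) continuous_const
    obtain ⟨K, hK, hxK, hsub⟩ := hB.exists_subset_of_mem_open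
      (u := Subtype.val '' {y : X | |(|f y| - |f (x n)|)| < 1}) ⟨x n, by simp, rfl⟩
      (hX.isOpenMap_subtype_val _ ho)
    exact ⟨K, hK, hxK, hsub⟩
  choose K hK hxK hsub using hex
  have hKX : ∀ n, K n ⊆ X := by
    intro n y hy
    obtain ⟨z, -, rfl⟩ := hsub n hy
    exact z.2
  have hKf : ∀ n (y : X), (y : B) ∈ K n → |(|f y| - |f (x n)|)| < 1 := by
    intro n y hy
    obtain ⟨z, hz, hzy⟩ := hsub n hy
    rwa [← Subtype.ext hzy]
  have hdlt : ∀ m n, m < n → Disjoint (K m) (K n) := by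
    intro m n hmn
    rw [Set.disjoint_left]
    intro y hm hn
    have h1 := abs_lt.1 (hKf m ⟨y, hKX m hm⟩ hm)
    have h2 := abs_lt.1 (hKf n ⟨y, hKX m hm⟩ hn)
    have h3 := hx m n hmn
    linarith [h1.1, h1.2, h2.1, h2.2]
  refine ⟨K, fun n => ⟨hK n, ⟨x n, hxK n⟩, hKX n⟩, ?_, ?_⟩
  · intro m n hmn
    rcases lt_or_gt_of_ne hmn with h | h
    · exact hdlt m n h
    · exact (hdlt n m h).symm
  · intro S
    have hlf : LocallyFinite fun n : S => (Subtype.val ⁻¹' K n : Set X) := by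
      intro y
      refine ⟨{z : X | |f z| < |f y| + 1},
        (isOpen_lt (by fun_prop) continuous_const).mem_nhds (by simp), ?_⟩
      -- If `K n` meets this neighborhood, then `n ≤ |f (x n)| < |f y| + 2`.
      refine ((Set.finite_Iic ⌈|f y| + 2⌉₊).preimage
        (Subtype.val_injective.injOn (s := Subtype.val ⁻¹' Set.Iic ⌈|f y| + 2⌉₊))).subset ?_
      rintro n ⟨z, hz, hzy⟩
      have h1 := abs_lt.1 (hKf n z hz)
      have h2 := hgrow n
      have h3 : |f z| < |f y| + 1 := hzy
      have h4 : ((n : ℕ) : ℝ) ≤ (⌈|f y| + 2⌉₊ : ℕ) :=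
        le_trans (by linarith [h1.1]) (Nat.le_ceil _)
      exact Nat.cast_le.1 h4
    have hclopen : IsClopen (⋃ n : S, (Subtype.val ⁻¹' K n : Set X)) :=
      ⟨hlf.isClosed_iUnion fun n => (hK n).1.preimage continuous_subtype_val,
        isOpen_iUnion fun n => (hK n).2.preimage continuous_subtype_val⟩
    obtain ⟨G, hG, hGx⟩ := hext (fun y => decide (y ∈ ⋃ n : S, (Subtype.val ⁻¹' K n : Set X)))
      ((continuous_bool_rng true).2 (by convert hclopen using 1; ext y; simp))
    refine ⟨G ⁻¹' {true}, (isClopen_discrete _).preimage hG, ?_⟩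
    ext y
    constructor
    · rintro ⟨hy, hyX⟩
      have h := hGx ⟨y, hyX⟩
      rw [show G y = true from hy] at h
      simpa using h.symm
    · intro hy
      obtain ⟨n, hn, hyn⟩ := mem_iUnion₂.1 hy
      refine ⟨?_, hKX n hyn⟩
      have h := hGx ⟨y, hKX n hyn⟩
      change G y = true
      rw [h]
      simpa using ⟨n, hn, hyn⟩

lemma trace_not_subset {B : Type*} [TopologicalSpace B] [CompactSpace B] {X : Set B}
    {K : ℕ → Set B} (hK : ∀ n, IsClopen (K n) ∧ (K n).Nonempty ∧ K n ⊆ X)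
    (hdisj : ∀ m n, m ≠ n → Disjoint (K m) (K n)) {S : Set ℕ} (hS : S.Infinite) {C : Set B}
    (hC : IsClopen C) (hCX : C ∩ X = ⋃ n ∈ S, K n) : (C \ X).Nonempty := by
  rw [Set.nonempty_iff_ne_empty, Ne, Set.sdiff_eq_empty]
  intro hsub
  have hCu : C = ⋃ n ∈ S, K n := by rw [← hCX, inter_eq_left.2 hsub]
  obtain ⟨t, ht⟩ := hC.1.isCompact.elim_finite_subcover K (fun n => (hK n).1.2)
    (by rw [hCu]; exact iUnion₂_subset fun n _ => subset_iUnion K n)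
  obtain ⟨n, hnS, hnt⟩ := hS.exists_notMem_finset t
  obtain ⟨y, hy⟩ := (hK n).2.1
  have hyC : y ∈ C := by rw [hCu]; exact mem_biUnion hnS hy
  obtain ⟨m, hm, hym⟩ := mem_iUnion₂.1 (ht hyC)
  have hmn : m ≠ n := fun h => hnt (h ▸ hm)
  exact Set.disjoint_left.1 (hdisj m n hmn) hym hy

lemma trace_inter_subset {B : Type*} [TopologicalSpace B] {X : Set B} (hd : Dense X)
    {K : ℕ → Set B} (hK : ∀ n, IsClopen (K n) ∧ (K n).Nonempty ∧ K n ⊆ X)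
    (hdisj : ∀ m n, m ≠ n → Disjoint (K m) (K n)) {S T : Set ℕ} (hST : (S ∩ T).Finite)
    {C D : Set B} (hC : IsClopen C) (hCX : C ∩ X = ⋃ n ∈ S, K n)
    (hD : IsClopen D) (hDX : D ∩ X = ⋃ n ∈ T, K n) : C ∩ D ⊆ X := by
  intro p hp
  by_contra hpX
  have hF : IsClosed (⋃ n ∈ S ∩ T, K n) := hST.isClosed_biUnion fun n _ => (hK n).1.1
  have hpF : p ∉ ⋃ n ∈ S ∩ T, K n := by
    intro h
    obtain ⟨n, -, hn⟩ := mem_iUnion₂.1 h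
    exact hpX ((hK n).2.2 hn)
  obtain ⟨y, ⟨⟨hyC, hyD⟩, hyF⟩, hyX⟩ := hd.inter_open_nonempty
    ((C ∩ D) ∩ (⋃ n ∈ S ∩ T, K n)ᶜ) ((hC.2.inter hD.2).inter hF.isOpen_compl) ⟨p, hp, hpF⟩
  have h1 : y ∈ ⋃ n ∈ S, K n := hCX ▸ ⟨hyC, hyX⟩
  have h2 : y ∈ ⋃ n ∈ T, K n := hDX ▸ ⟨hyD, hyX⟩
  obtain ⟨m, hm, hym⟩ := mem_iUnion₂.1 h1
  obtain ⟨n, hn, hyn⟩ := mem_iUnion₂.1 h2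
  have hmn : m = n := by
    by_contra h
    exact Set.disjoint_left.1 (hdisj m n h) hym hyn
  subst hmn
  exact hyF (mem_biUnion ⟨hm, hn⟩ hym)

/-- Open sets of `B` indexed by `ℕ → Bool`, meeting `Y` in nonempty pairwise disjoint sets,
give a cellular family of size `2 ^ ℵ₀` in `Y`. -/
lemma exists_cellular_family {B : Type u} [TopologicalSpace B] (Y : Set B)
    (C : (ℕ → Bool) → Set B) (hC : ∀ a, IsOpen (C a)) (hne : ∀ a, (C a ∩ Y).Nonempty)
    (hdisj : ∀ a b, a ≠ b → C a ∩ C b ⊆ Yᶜ) :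
    ∃ 𝒰 : Set (Set Y), (∀ V ∈ 𝒰, IsOpen V ∧ V.Nonempty) ∧
      𝒰.PairwiseDisjoint id ∧ (2 : Cardinal) ^ Cardinal.aleph0 ≤ Cardinal.mk 𝒰 := by
  have hd : ∀ a b, a ≠ b → Disjoint (Subtype.val ⁻¹' C a : Set Y) (Subtype.val ⁻¹' C b) := by
    intro a b hab
    rw [Set.disjoint_left]
    intro y hya hyb
    exact hdisj a b hab ⟨hya, hyb⟩ y.2
  have hn : ∀ a, (Subtype.val ⁻¹' C a : Set Y).Nonempty := by
    intro a
    obtain ⟨y, hyC, hyY⟩ := hne a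
    exact ⟨⟨y, hyY⟩, hyC⟩
  have hinj : Function.Injective fun a => (Subtype.val ⁻¹' C a : Set Y) := by
    intro a b hab
    by_contra h
    have h1 := hd a b h
    have hab' : (Subtype.val ⁻¹' C a : Set Y) = Subtype.val ⁻¹' C b := hab
    rw [← hab', disjoint_self] at h1
    exact (hn a).ne_empty h1
  refine ⟨range fun a => (Subtype.val ⁻¹' C a : Set Y), ?_, ?_, ?_⟩
  · rintro _ ⟨a, rfl⟩
    exact ⟨(hC a).preimage continuous_subtype_val, hn a⟩
  · rintro _ ⟨a, rfl⟩ _ ⟨b, rfl⟩ hab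
    exact hd a b fun h => hab (by rw [h])
  · have h := Cardinal.mk_range_eq_of_injective hinj
    have h2 : Cardinal.mk (ℕ → Bool) = 2 ^ Cardinal.aleph0 := by simp
    rw [h2] at h
    simp only [Cardinal.lift_id', Cardinal.lift_power, Cardinal.lift_ofNat, Cardinal.lift_aleph0] at h
    exact h.ge

/-- If `X` is zero-dimensional, locally compact and not pseudocompact, then
both `B ∖ υX` and `B ∖ X` contain a pairwise disjoint family of nonempty open sets of
cardinality `2 ^ ℵ₀`; in particular their cellularity is at least `2 ^ ℵ₀`. -/
theorem stmt_19 {B : Type u} [TopologicalSpace B] [CompactSpace B] [T2Space B]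
    (hB : IsTopologicalBasis {s : Set B | IsClopen s})
    (X : Set B) (hd : Dense X)
    (hext : ∀ g : X → Bool, Continuous g → ∃ G : B → Bool, Continuous G ∧ ∀ x : X, G x = g x)
    (hlc : LocallyCompactSpace X)
    (hnp : ¬ ∀ f : X → ℝ, Continuous f → ∃ M : ℝ, ∀ x, |f x| ≤ M) :
    (∃ 𝒰 : Set (Set ((upsilon X)ᶜ : Set B)), (∀ V ∈ 𝒰, IsOpen V ∧ V.Nonempty) ∧
        𝒰.PairwiseDisjoint id ∧ (2 : Cardinal) ^ Cardinal.aleph0 ≤ Cardinal.mk 𝒰) ∧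
    (∃ 𝒰 : Set (Set (Xᶜ : Set B)), (∀ V ∈ 𝒰, IsOpen V ∧ V.Nonempty) ∧
        𝒰.PairwiseDisjoint id ∧ (2 : Cardinal) ^ Cardinal.aleph0 ≤ Cardinal.mk 𝒰) := by
  have hX : IsOpen X := isOpen_of_dense_of_locallyCompact hd hlc
  obtain ⟨K, hK, hdisj, hC⟩ := exists_clopen_sequence hB X hX hext hnp
  choose C hC hCX using hC
  have hsub : X ⊆ upsilon X := fun p hp V hV => ⟨p, mem_iInter.2 fun n => (hV n).2, hp⟩
  have hout : ∀ S, C S \ X ⊆ (upsilon X)ᶜ := by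
    rintro S p ⟨hpC, hpX⟩ hp
    obtain ⟨y, hy, hyX⟩ := hp (fun n => C S \ K n) fun n =>
      ⟨(hC S).diff (hK n).1, hpC, fun h => hpX ((hK n).2.2 h)⟩
    rw [mem_iInter] at hy
    have hyS : y ∈ ⋃ n ∈ S, K n := hCX S ▸ ⟨(hy 0).1, hyX⟩
    obtain ⟨n, -, hn⟩ := mem_iUnion₂.1 hyS
    exact (hy n).2 hn
  have hne : ∀ a, (C (branch a) \ X).Nonempty := fun a =>
    trace_not_subset hK hdisj (branch_infinite a) (hC _) (hCX _)
  have hint : ∀ a b, a ≠ b → C (branch a) ∩ C (branch b) ⊆ X := fun a b hab =>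
    trace_inter_subset hd hK hdisj (branch_inter_finite hab) (hC _) (hCX _) (hC _) (hCX _)
  constructor
  · refine exists_cellular_family _ (fun a => C (branch a)) (fun a => (hC _).2) ?_ ?_
    · intro a
      obtain ⟨p, hp⟩ := hne a
      exact ⟨p, hp.1, hout _ hp⟩
    · intro a b hab
      rw [compl_compl]
      exact (hint a b hab).trans hsub
  · refine exists_cellular_family _ (fun a => C (branch a)) (fun a => (hC _).2) hne ?_
    intro a b hab
    rw [compl_compl]
    exact hint a b hab
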